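/- The group L₋₁ presented by two generators a, t subject to the two defining relations (a·t)³ = a³ and [[t,a],t] = a⁻³ is an infinite group and is not nilpotent. -/

import Mathlib

/-- The commutator `[g,h] = g⁻¹h⁻¹gh`. -/
def fcomm {G : Type*} [Group G] (g h : G) : G := g⁻¹ * h⁻¹ * g * h

/-- The generator `a` of the free group on two generators. -/
def aF : FreeGroup (Fin 2) := FreeGroup.of 0

/-- The generator `t` of the free group on two generators. -/
def tF : FreeGroup (Fin 2) := FreeGroup.of 1

/-- The relators of `L₋₁ = ⟨a, t ∣ (a·t)³ = a³, [[t,a],t] = a⁻³⟩`: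
`(a·t)³·(a³)⁻¹` and `[[t,a],t]·a³`. -/
def LnegRels : Set (FreeGroup (Fin 2)) :=
  {(aF * tF) ^ 3 * (aF ^ 3)⁻¹, fcomm (fcomm tF aF) tF * aF ^ 3}

/-- The skeleton limit group `L₋₁` attached to the Q-tree. -/
abbrev Lneg : Type := PresentedGroup LnegRels

/-!
Let `u` be a primitive cube root of unity and `v` a vector. Letting `a` act on an affine space as
the rotation `x ↦ u x` and `t` as the translation `x ↦ x + v` respects the relations of `L₋₁`: the
cubes of `a` and `a * t`, affine maps with linear part `u`, are trivial because `1 + u + u² = 0`,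
and `[t, a]` is a translation, hence commutes with `t`. In characteristic zero `t` has infinite
order. Commutation with `a` multiplies translation vectors by `1 - u ≠ 0`, so the iterated
commutators `⁅…⁅⁅t, a⁆, a⁆…, a⁆` never become trivial, as they would in a nilpotent group.
-/

open AffineEquiv
open scoped commutatorElement

section Group

variable {G H : Type*} [Group G] [Group H]

theorem fcomm_eq_commutatorElement_inv (g h : G) : fcomm g h = ⁅g⁻¹, h⁻¹⁆ := by
  simp only [fcomm, commutatorElement_def, inv_inv]

theorem map_fcomm (f : G →* H) (g h : G) : f (fcomm g h) = fcomm (f g) (f h) := by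
  simp only [fcomm, map_mul, map_inv]

theorem iterate_commutator_mem_lowerCentralSeries (g h : G) (n : ℕ) :
    (⁅·, h⁆)^[n] g ∈ (⊤ : Subgroup G).lowerCentralSeries n := by
  induction n with
  | zero => exact Subgroup.mem_top g
  | succ n ih =>
    rw [Function.iterate_succ_apply']
    exact Subgroup.commutator_mem_commutator ih (Subgroup.mem_top h)

theorem exists_iterate_commutator_eq_one [Group.IsNilpotent G] (g h : G) :
    ∃ n, (⁅·, h⁆)^[n] g = 1 := by
  obtain ⟨n, hn⟩ := Subgroup.nilpotent_iff_lowerCentralSeries.mp ‹Group.IsNilpotent G›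
  exact ⟨n, Subgroup.mem_bot.mp (hn ▸ iterate_commutator_mem_lowerCentralSeries g h n)⟩

end Group

section Translation

variable {k V P : Type*} [Ring k] [AddCommGroup V] [Module k V] [AddTorsor V P]

theorem constVAdd_add_eq_mul (v w : V) :
    constVAdd k P (v + w) = constVAdd k P v * constVAdd k P w :=
  constVAdd_add k P v w

theorem constVAdd_inv (v : V) : (constVAdd k P v)⁻¹ = constVAdd k P (-v) :=
  constVAdd_symm k P v

theorem constVAdd_commute (v w : V) : Commute (constVAdd k P v) (constVAdd k P w) := by
  rw [commute_iff_eq, ← constVAdd_add_eq_mul, add_comm, constVAdd_add_eq_mul]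

theorem constVAddHom_injective : Function.Injective (constVAddHom k P) := by
  intro v w h
  obtain ⟨p⟩ : Nonempty P := AddTorsor.nonempty
  exact Multiplicative.toAdd.injective (vadd_right_cancel p (DFunLike.congr_fun h p))

theorem constVAdd_eq_one_iff {v : V} : constVAdd k P v = 1 ↔ v = 0 :=
  map_eq_one_iff (constVAddHom k P) constVAddHom_injective

theorem isOfFinOrder_constVAdd_iff {v : V} :
    IsOfFinOrder (constVAdd k P v) ↔ IsOfFinAddOrder v :=
  (constVAddHom_injective (k := k) (P := P)).isOfFinOrder_iff.trans isOfFinOrder_ofAdd_iff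

theorem affineEquiv_mul_constVAdd (e : P ≃ᵃ[k] P) (v : V) :
    e * constVAdd k P v = constVAdd k P (e.linear v) * e := by
  ext x
  exact e.map_vadd x v

theorem commutator_constVAdd (v : V) (e : P ≃ᵃ[k] P) :
    ⁅constVAdd k P v, e⁆ = constVAdd k P (v - e.linear v) := by
  rw [commutatorElement_def, mul_assoc _ e, constVAdd_inv, affineEquiv_mul_constVAdd, map_neg,
    mul_assoc, mul_inv_cancel_right, ← constVAdd_add_eq_mul, sub_eq_add_neg]

theorem fcomm_fcomm_constVAdd_eq_one (v : V) (e : P ≃ᵃ[k] P) :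
    fcomm (fcomm (constVAdd k P v) e) (constVAdd k P v) = 1 := by
  rw [fcomm_eq_commutatorElement_inv, fcomm_eq_commutatorElement_inv, constVAdd_inv,
    commutator_constVAdd, constVAdd_inv]
  exact (constVAdd_commute _ _).commutator_eq

theorem affineEquiv_mul_constVAdd_pow (e : P ≃ᵃ[k] P) (v : V) (n : ℕ) :
    (e * constVAdd k P v) ^ n =
      constVAdd k P (∑ i ∈ Finset.range n, (e.linear ^ (i + 1)) v) * e ^ n := by
  induction n with
  | zero => simp [constVAdd_eq_one_iff.mpr rfl]
  | succ n ih =>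
    calc (e * constVAdd k P v) ^ (n + 1)
        = constVAdd k P (e.linear v) *
            (e * constVAdd k P (∑ i ∈ Finset.range n, (e.linear ^ (i + 1)) v)) * e ^ n := by
          rw [pow_succ', ih, affineEquiv_mul_constVAdd]
          simp only [mul_assoc]
      _ = constVAdd k P (∑ i ∈ Finset.range (n + 1), (e.linear ^ (i + 1)) v) * e ^ (n + 1) := by
          rw [affineEquiv_mul_constVAdd, ← mul_assoc, ← constVAdd_add_eq_mul, mul_assoc,
            ← pow_succ', map_sum, Finset.sum_range_succ', add_comm]
          simp only [pow_succ', LinearEquiv.mul_apply, pow_zero, mul_one]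

end Translation

section Homothety

variable {R V P : Type*} [CommRing R] [AddCommGroup V] [Module R V] [AddTorsor V P]

theorem linear_homothetyUnitsMulHom_apply (p : P) (u : Rˣ) (v : V) :
    (homothetyUnitsMulHom p u).linear v = (u : R) • v :=
  DFunLike.congr_fun (AffineMap.homothety_linear p (u : R)) v

theorem iterate_commutator_constVAdd_homothety (p : P) (u : Rˣ) (v : V) (n : ℕ) :
    (⁅·, homothetyUnitsMulHom p u⁆)^[n] (constVAdd R P v) =
      constVAdd R P ((1 - u : R) ^ n • v) := by
  induction n with
  | zero => simp
  | succ n ih =>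
    rw [Function.iterate_succ_apply', ih, commutator_constVAdd, linear_homothetyUnitsMulHom_apply,
      pow_succ', mul_smul, sub_smul, one_smul]

theorem homothety_mul_constVAdd_pow_eq_one [IsDomain R] {u : Rˣ} {n : ℕ} (hn : 1 < n)
    (hu : IsPrimitiveRoot u n) (p : P) (v : V) :
    (homothetyUnitsMulHom p u * constVAdd R P v) ^ n = 1 := by
  have linear_pow (i : ℕ) : ((homothetyUnitsMulHom p u).linear ^ i) v = (u : R) ^ i • v := by
    induction i with
    | zero => simp
    | succ i ih =>
      rw [pow_succ', LinearEquiv.mul_apply, ih, linear_homothetyUnitsMulHom_apply, pow_succ',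
        mul_smul]
  rw [affineEquiv_mul_constVAdd_pow, ← map_pow, hu.pow_eq_one, map_one, mul_one,
    constVAdd_eq_one_iff]
  calc ∑ i ∈ Finset.range n, ((homothetyUnitsMulHom p u).linear ^ (i + 1)) v
      = ((u : R) * ∑ i ∈ Finset.range n, (u : R) ^ i) • v := by
        simp only [linear_pow, Finset.mul_sum, Finset.sum_smul, ← pow_succ']
    _ = 0 := by rw [(IsPrimitiveRoot.coe_units_iff.mpr hu).geom_sum_eq_zero hn, mul_zero, zero_smul]

end Homothety

namespace Lneg

/-- The generator `a` of `L₋₁`. -/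
def a : Lneg := PresentedGroup.of 0

/-- The generator `t` of `L₋₁`. -/
def t : Lneg := PresentedGroup.of 1

variable {R V P : Type*} [CommRing R] [IsDomain R] [AddCommGroup V] [Module R V] [AddTorsor V P]

/-- The affine representation of `L₋₁` attached to a primitive cube root of unity `u`: the generator
`a` acts as the homothety of ratio `u` about `p`, the generator `t` as the translation by `v`. On
the complex line with `v ≠ 0` the image is the rotation subgroup of the `(3,3,3)` triangle group. -/
def affineRep {u : Rˣ} (hu : IsPrimitiveRoot u 3) (p : P) (v : V) : Lneg →* P ≃ᵃ[R] P :=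
  PresentedGroup.toGroup (f := ![homothetyUnitsMulHom p u, constVAdd R P v]) <| by
    have homothety_pow : homothetyUnitsMulHom p u ^ 3 = 1 := by
      rw [← map_pow, hu.pow_eq_one, map_one]
    rintro r (rfl | rfl)
    · simp [aF, tF, homothety_pow, homothety_mul_constVAdd_pow_eq_one (by norm_num) hu]
    · simp [aF, tF, map_fcomm, homothety_pow, fcomm_fcomm_constVAdd_eq_one]

variable {u : Rˣ} (hu : IsPrimitiveRoot u 3) (p : P) (v : V)

theorem affineRep_a : affineRep hu p v a = homothetyUnitsMulHom p u :=
  PresentedGroup.toGroup.of _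

theorem affineRep_t : affineRep hu p v t = constVAdd R P v :=
  PresentedGroup.toGroup.of _

theorem affineRep_iterate_commutator (n : ℕ) :
    affineRep hu p v ((⁅·, a⁆)^[n] t) = constVAdd R P ((1 - u : R) ^ n • v) := by
  have semiconj : Function.Semiconj (affineRep hu p v) (⁅·, a⁆) (⁅·, homothetyUnitsMulHom p u⁆) :=
    fun g ↦ by rw [map_commutatorElement, affineRep_a]
  rw [semiconj.iterate_right n t, affineRep_t, iterate_commutator_constVAdd_homothety]

end Lneg

theorem Lneg_infinite_and_not_nilpotent :
    Infinite Lneg ∧ ¬ Group.IsNilpotent Lneg := by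
  obtain ⟨u, hu⟩ : ∃ u : ℂˣ, IsPrimitiveRoot u 3 :=
    ⟨_, (Complex.isPrimitiveRoot_exp 3 three_ne_zero).isUnit_unit three_ne_zero⟩
  let φ : Lneg →* ℂ ≃ᵃ[ℂ] ℂ := Lneg.affineRep hu 0 1
  refine ⟨not_finite_iff_infinite.mp fun _ ↦ ?_, fun _ ↦ ?_⟩
  · have ht : IsOfFinOrder (φ Lneg.t) := φ.isOfFinOrder (isOfFinOrder_of_finite Lneg.t)
    rw [Lneg.affineRep_t, isOfFinOrder_constVAdd_iff] at ht
    exact one_ne_zero ht.eq_zero'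
  · obtain ⟨n, hn⟩ := exists_iterate_commutator_eq_one Lneg.t Lneg.a
    have translation_eq_one : constVAdd ℂ ℂ ((1 - u : ℂ) ^ n • (1 : ℂ)) = 1 := by
      rw [← Lneg.affineRep_iterate_commutator hu 0, hn, map_one]
    have u_ne_one : (u : ℂ) ≠ 1 := (IsPrimitiveRoot.coe_units_iff.mpr hu).ne_one (by norm_num)
    exact smul_ne_zero (pow_ne_zero n (sub_ne_zero.mpr u_ne_one.symm)) one_ne_zero
      (constVAdd_eq_one_iff.mp translation_eq_one)
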